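/- Suppose ψ̃ has M vanishing moments and let p ≥ 1. Then there exists a constant C > 0, depending only on ψ̃, M, L and p, such that for every function f : ℝ² → ℝ all of whose partial derivatives ∂^{a+b}/∂x^a∂y^b f with 0 ≤ a ≤ M, 0 ≤ b ≤ M exist and are continuous, every σ₁, σ₂ > 0 and every θ₁, θ₂ ∈ ℝ, |∬_{ℝ²} f(x,y) ψ̃(σ₁x − θ₁) ψ̃(σ₂y − θ₂) dx dy| ≤ C · (σ₁σ₂)^{−(M+1−1/p)} · ( ∬_{R(σ₁,θ₁,σ₂,θ₂)} |∂^{2M} f/∂x^M∂y^M (x,y)|^p dy dx )^{1/p}. -/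

import Mathlib

open MeasureTheory

/-- Mixed partial derivative `∂^{a+b} f/∂x^a ∂y^b` of `f : ℝ² → ℝ` (first `a` times
in `x`, then `b` times in `y`). -/
noncomputable def partialDeriv2 (a b : ℕ) (f : ℝ → ℝ → ℝ) : ℝ → ℝ → ℝ :=
  fun x y => iteratedDeriv b (fun y' => iteratedDeriv a (fun x' => f x' y') x) y

open Set Function

/-!
A wavelet with `M` vanishing moments is, up to sign, the `M`-th derivative of a function `κ`
supported in the same interval: integrating from `x` to `∞` preserves the support because the mean
vanishes, and integration by parts uses up one moment. Hence `∫ g ψ = ∫ g⁽ᴹ⁾ κ`, and for a dilate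
`ψ (σ · - θ)` the kernel becomes `σ⁻ᴹ κ (σ · - θ)`. Doing this in each variable moves all the
derivatives onto `f`; bounding the kernels by their suprema and applying Hölder's inequality on the
rectangle, whose area is proportional to `(σ₁ σ₂)⁻¹`, gives the estimate.
-/

/-- Integrable functions on the line supported in `s`: the common class of wavelets and their Peano
kernels. Plain support, not topological support, is required to lie in `s`. -/
structure IsWindowed (s : Set ℝ) (φ : ℝ → ℝ) : Prop where
  integrable : Integrable φ
  support_subset : support φ ⊆ s

/-- Integrable functions supported in `s` with `M` vanishing moments, playing the role of `ψ̃`. -/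
structure IsWavelet (s : Set ℝ) (M : ℕ) (ψ : ℝ → ℝ) : Prop extends IsWindowed s ψ where
  integral_pow_mul : ∀ k < M, ∫ x, x ^ k * ψ x = 0

/-- `κ` is a Peano kernel of order `n` of the functional `g ↦ ∫ g ψ`: it represents this functional
in terms of the `n`-th derivative of `g`. -/
def IsPeanoKernel (n : ℕ) (ψ κ : ℝ → ℝ) : Prop :=
  ∀ g : ℝ → ℝ, ContDiff ℝ n g → ∫ x, g x * ψ x = ∫ x, iteratedDeriv n g x * κ x

/-- The primitive of `-φ` that vanishes at `∞`; its iterates are the Peano kernels of a wavelet. -/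
noncomputable def tailIntegral (φ : ℝ → ℝ) (x : ℝ) : ℝ :=
  ∫ t in Ioi x, φ t

theorem abs_tailIntegral_le {φ : ℝ → ℝ} (hφ : Integrable φ) (x : ℝ) :
    |tailIntegral φ x| ≤ ∫ t, |φ t| :=
  abs_integral_le_integral_abs.trans
    (setIntegral_le_integral hφ.abs (.of_forall fun _ => abs_nonneg _))

namespace IsWindowed

variable {a b : ℝ} {s t : Set ℝ} {φ χ : ℝ → ℝ}

theorem eq_zero_of_notMem (hφ : IsWindowed s φ) {x : ℝ} (hx : x ∉ s) : φ x = 0 :=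
  notMem_support.1 fun h => hx (hφ.support_subset h)

theorem const_mul (hφ : IsWindowed s φ) (c : ℝ) : IsWindowed s fun x => c * φ x where
  integrable := hφ.integrable.const_mul c
  support_subset := (support_mul_subset_right _ _).trans hφ.support_subset

theorem comp_mul_sub (hφ : IsWindowed s φ) {σ : ℝ} (hσ : σ ≠ 0) (θ : ℝ) :
    IsWindowed ((fun x => σ * x - θ) ⁻¹' s) fun x => φ (σ * x - θ) where
  integrable := (hφ.integrable.comp_sub_right θ).comp_mul_left' hσ
  support_subset := fun _ hx => hφ.support_subset hx

theorem integral_mul_eq_intervalIntegral (hφ : IsWindowed (Icc a b) φ) (hab : a ≤ b)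
    (g : ℝ → ℝ) : ∫ x, g x * φ x = ∫ x in a..b, g x * φ x := by
  rw [intervalIntegral.integral_of_le hab, ← integral_Icc_eq_integral_Ioc,
    setIntegral_eq_integral_of_forall_compl_eq_zero fun x hx => by
      rw [hφ.eq_zero_of_notMem hx, mul_zero]]

theorem tailIntegral_eq_zero_of_le (hφ : IsWindowed (Icc a b) φ) {x : ℝ} (hx : b ≤ x) :
    tailIntegral φ x = 0 :=
  setIntegral_eq_zero_of_forall_eq_zero fun _ ht =>
    hφ.eq_zero_of_notMem fun h => (hx.trans_lt ht).not_ge h.2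

theorem tailIntegral_eq_integral_of_le (hφ : IsWindowed (Icc a b) φ) {x : ℝ} (hx : x ≤ a) :
    tailIntegral φ x = ∫ t, φ t := by
  rw [tailIntegral, ← integral_Ici_eq_integral_Ioi]
  exact setIntegral_eq_integral_of_forall_compl_eq_zero fun t ht =>
    hφ.eq_zero_of_notMem fun h => ht (hx.trans h.1)

theorem tailIntegral_eq_neg_intervalIntegral (hφ : IsWindowed (Icc a b) φ)
    (hmean : ∫ x, φ x = 0) (x : ℝ) : tailIntegral φ x = -∫ t in a..x, φ t := by
  have hsub := intervalIntegral.integral_Ioi_sub_Ioi' (hφ.integrable.integrableOn (s := Ioi a))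
    (hφ.integrable.integrableOn (s := Ioi x))
  have htail : tailIntegral φ a = 0 := (hφ.tailIntegral_eq_integral_of_le le_rfl).trans hmean
  rw [← hsub, ← tailIntegral, ← tailIntegral, htail, zero_sub, neg_neg]

protected theorem tailIntegral (hφ : IsWindowed (Icc a b) φ) (hmean : ∫ x, φ x = 0) :
    IsWindowed (Icc a b) (tailIntegral φ) := by
  have hsupp : support (tailIntegral φ) ⊆ Icc a b := by
    intro x hx
    by_contra hmem
    rcases not_and_or.1 hmem with hxa | hxb
    · exact hx ((hφ.tailIntegral_eq_integral_of_le (not_le.1 hxa).le).trans hmean)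
    · exact hx (hφ.tailIntegral_eq_zero_of_le (not_le.1 hxb).le)
  have hcont : Continuous (tailIntegral φ) := by
    rw [funext (hφ.tailIntegral_eq_neg_intervalIntegral hmean)]
    exact (intervalIntegral.continuous_primitive
      (fun _ _ => hφ.integrable.intervalIntegrable) a).neg
  exact ⟨hcont.integrable_of_hasCompactSupport (.of_support_subset_isCompact isCompact_Icc hsupp),
    hsupp⟩

theorem integral_mul_eq_integral_deriv_mul_tailIntegral (hφ : IsWindowed (Icc a b) φ)
    (hab : a ≤ b) (hmean : ∫ x, φ x = 0) {g : ℝ → ℝ} (hg : AbsolutelyContinuousOnInterval g a b) :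
    ∫ x, g x * φ x = ∫ x, deriv g x * tailIntegral φ x := by
  set Φ : ℝ → ℝ := fun x => ∫ t in a..x, φ t
  have hint : IntervalIntegrable φ volume a b := hφ.integrable.intervalIntegrable
  have htail : tailIntegral φ = fun x => -Φ x :=
    funext (hφ.tailIntegral_eq_neg_intervalIntegral hmean)
  have hΦ : AbsolutelyContinuousOnInterval Φ a b :=
    hint.absolutelyContinuousOnInterval_intervalIntegral left_mem_uIcc
  have hΦa : Φ a = 0 := intervalIntegral.integral_same
  have hΦb : Φ b = 0 := by
    rw [← neg_eq_zero, ← congrFun htail b, hφ.tailIntegral_eq_zero_of_le le_rfl]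
  have hderiv : ∫ x in a..b, g x * φ x = ∫ x in a..b, g x * deriv Φ x := by
    apply intervalIntegral.integral_congr_ae
    filter_upwards [hint.ae_hasDerivAt_integral] with x hx hxab
    rw [(hx (uIoc_subset_uIcc hxab) a left_mem_uIcc).deriv]
  calc ∫ x, g x * φ x
    _ = ∫ x in a..b, g x * deriv Φ x := by
      rw [hφ.integral_mul_eq_intervalIntegral hab, hderiv]
    _ = -∫ x in a..b, deriv g x * Φ x := by
      rw [hg.integral_mul_deriv_eq_deriv_mul hΦ, hΦa, hΦb]
      ring
    _ = ∫ x, deriv g x * tailIntegral φ x := by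
      rw [(hφ.tailIntegral hmean).integral_mul_eq_intervalIntegral hab, htail]
      simp only [mul_neg, intervalIntegral.integral_neg]

theorem integrable_mul_mul (hφ : IsWindowed s φ) (hχ : IsWindowed t χ) (hs : IsCompact s)
    (ht : IsCompact t) {F : ℝ × ℝ → ℝ} (hF : ContinuousOn F (s ×ˢ t)) :
    Integrable fun z : ℝ × ℝ => F z * φ z.1 * χ z.2 := by
  have hφχ : Integrable fun z : ℝ × ℝ => φ z.1 * χ z.2 := hφ.integrable.mul_prod hχ.integrable
  simp only [mul_assoc]
  refine (integrableOn_iff_integrable_of_support_subset fun z hz => ?_).1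
    (hφχ.integrableOn.continuousOn_mul hF (hs.prod ht))
  have hz' := right_ne_zero_of_mul hz
  exact ⟨hφ.support_subset (left_ne_zero_of_mul hz'), hχ.support_subset (right_ne_zero_of_mul hz')⟩

theorem abs_integral_mul_mul_le (hφ : IsWindowed s φ) (hχ : IsWindowed t χ) {A B : ℝ}
    (hA : ∀ x, |φ x| ≤ A) (hB : ∀ y, |χ y| ≤ B) {F : ℝ × ℝ → ℝ} (hF : IntegrableOn F (s ×ˢ t)) :
    |∫ z : ℝ × ℝ, F z * φ z.1 * χ z.2| ≤ A * B * ∫ z in s ×ˢ t, |F z| := by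
  have hA0 : 0 ≤ A := (abs_nonneg _).trans (hA 0)
  have hvanish : ∀ z ∉ s ×ˢ t, F z * φ z.1 * χ z.2 = 0 := by
    intro z hz
    rcases not_and_or.1 hz with hs | ht
    · rw [hφ.eq_zero_of_notMem hs, mul_zero, zero_mul]
    · rw [hχ.eq_zero_of_notMem ht, mul_zero]
  rw [← setIntegral_eq_integral_of_forall_compl_eq_zero hvanish, ← integral_const_mul,
    ← Real.norm_eq_abs]
  refine norm_integral_le_of_norm_le (Integrable.const_mul hF.abs _) (.of_forall fun z => ?_)
  calc ‖F z * φ z.1 * χ z.2‖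
    _ = |F z| * |φ z.1| * |χ z.2| := by rw [Real.norm_eq_abs, abs_mul, abs_mul]
    _ ≤ |F z| * A * B := by gcongr <;> apply_assumption
    _ = A * B * |F z| := by ring

end IsWindowed

namespace IsWavelet

variable {a b : ℝ} {n : ℕ} {ψ : ℝ → ℝ}

theorem integral_eq_zero {s : Set ℝ} (hψ : IsWavelet s (n + 1) ψ) : ∫ x, ψ x = 0 := by
  simpa using hψ.integral_pow_mul 0 n.succ_pos

protected theorem tailIntegral (hψ : IsWavelet (Icc a b) (n + 1) ψ) (hab : a ≤ b) :
    IsWavelet (Icc a b) n (tailIntegral ψ) where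
  toIsWindowed := hψ.toIsWindowed.tailIntegral hψ.integral_eq_zero
  integral_pow_mul k hk := by
    have hpow : ContDiff ℝ 1 fun x : ℝ => x ^ (k + 1) := contDiff_id.pow _
    have hparts := hψ.integral_mul_eq_integral_deriv_mul_tailIntegral hab hψ.integral_eq_zero
      hpow.contDiffOn.absolutelyContinuousOnInterval
    simp only [hψ.integral_pow_mul (k + 1) (Nat.succ_lt_succ hk), deriv_pow_field, mul_assoc,
      integral_const_mul, Nat.add_sub_cancel] at hparts
    exact (mul_eq_zero.1 hparts.symm).resolve_left (Nat.cast_ne_zero.2 k.succ_ne_zero)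

theorem tailIntegral_iterate (hab : a ≤ b) (m : ℕ) :
    ∀ {ψ : ℝ → ℝ}, IsWavelet (Icc a b) (n + m) ψ →
      IsWavelet (Icc a b) n (tailIntegral^[m] ψ) := by
  induction m with
  | zero => exact id
  | succ m ih => exact fun hψ => ih (hψ.tailIntegral hab)

theorem isPeanoKernel_tailIntegral_iterate (hab : a ≤ b) :
    ∀ {n : ℕ} {ψ : ℝ → ℝ}, IsWavelet (Icc a b) n ψ →
      IsPeanoKernel n ψ (tailIntegral^[n] ψ) := by
  intro n
  induction n with
  | zero => exact fun _ g _ => by simp only [iteratedDeriv_zero, iterate_zero, id]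
  | succ n ih =>
    intro ψ hψ g hg
    have hg' : ContDiff ℝ n (deriv g) := by
      rw [Nat.cast_succ, contDiff_succ_iff_deriv] at hg
      exact hg.2.2
    have hgac : AbsolutelyContinuousOnInterval g a b :=
      (hg.of_le (by simp)).contDiffOn.absolutelyContinuousOnInterval
    rw [hψ.integral_mul_eq_integral_deriv_mul_tailIntegral hab hψ.integral_eq_zero hgac,
      ih (hψ.tailIntegral hab) (deriv g) hg', iteratedDeriv_succ', iterate_succ_apply]

theorem exists_bounded_peanoKernel (hψ : IsWavelet (Icc a b) n ψ) (hab : a ≤ b) (hn : 0 < n) :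
    ∃ κ : ℝ → ℝ, IsWindowed (Icc a b) κ ∧ IsPeanoKernel n ψ κ ∧ ∃ B > 0, ∀ x, |κ x| ≤ B := by
  obtain ⟨m, rfl⟩ := Nat.exists_eq_add_of_lt hn
  rw [zero_add] at hψ ⊢
  have hprev : IsWavelet (Icc a b) 1 (tailIntegral^[m] ψ) :=
    tailIntegral_iterate hab m (add_comm m 1 ▸ hψ)
  refine ⟨tailIntegral^[m + 1] ψ, ?_, hψ.isPeanoKernel_tailIntegral_iterate hab,
    (∫ t, |(tailIntegral^[m] ψ) t|) + 1, by positivity, fun x => ?_⟩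
  · rw [iterate_succ_apply']
    exact (hprev.tailIntegral hab).toIsWindowed
  · rw [iterate_succ_apply']
    exact (abs_tailIntegral_le hprev.integrable x).trans (le_add_of_nonneg_right zero_le_one)

end IsWavelet

theorem integral_comp_mul_sub (F : ℝ → ℝ) (σ θ : ℝ) :
    ∫ x, F (σ * x - θ) = |σ⁻¹| * ∫ u, F u := by
  rw [Measure.integral_comp_mul_left (fun x => F (x - θ)) σ, integral_sub_right_eq_self F θ,
    smul_eq_mul]

theorem IsPeanoKernel.comp_mul_sub {n : ℕ} {ψ κ : ℝ → ℝ} (h : IsPeanoKernel n ψ κ) {σ : ℝ}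
    (hσ : σ ≠ 0) (θ : ℝ) :
    IsPeanoKernel n (fun x => ψ (σ * x - θ)) fun x => (σ ^ n)⁻¹ * κ (σ * x - θ) := by
  intro g hg
  have hinv : ∀ x, σ⁻¹ * (σ * x - θ + θ) = x := fun x => by
    rw [sub_add_cancel, inv_mul_cancel_left₀ hσ]
  have hleft := integral_comp_mul_sub (fun u => g (σ⁻¹ * (u + θ)) * ψ u) σ θ
  have hright := integral_comp_mul_sub (fun u => iteratedDeriv n g (σ⁻¹ * (u + θ)) * κ u) σ θ
  simp only [hinv] at hleft hright
  rw [hleft, h (fun u => g (σ⁻¹ * (u + θ))) (by fun_prop),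
    iteratedDeriv_comp_add_const n (fun z => g (σ⁻¹ * z)) θ, iteratedDeriv_comp_const_mul hg]
  simp only [mul_left_comm _ (σ ^ n)⁻¹, mul_assoc, integral_const_mul, hright, inv_pow]

/-- The interval `I(σ, θ)` carrying the dilate `x ↦ ψ (σ x - θ)` of a function supported in
`[-L, L]`. -/
def window (L σ θ : ℝ) : Set ℝ :=
  Icc ((θ - L) / σ) ((θ + L) / σ)

theorem isCompact_window (L σ θ : ℝ) : IsCompact (window L σ θ) :=
  isCompact_Icc

theorem preimage_mul_sub_Icc_eq_window (L θ : ℝ) {σ : ℝ} (hσ : 0 < σ) :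
    (fun x => σ * x - θ) ⁻¹' Icc (-L) L = window L σ θ := by
  ext x
  simp only [window, mem_preimage, mem_Icc, div_le_iff₀' hσ, le_div_iff₀' hσ]
  constructor <;> rintro ⟨hl, hr⟩ <;> constructor <;> linarith

theorem volume_real_window {L σ : ℝ} (hL : 0 ≤ L) (hσ : 0 < σ) (θ : ℝ) :
    volume.real (window L σ θ) = 2 * L / σ := by
  rw [window, Real.volume_real_Icc_of_le (by gcongr; linarith)]
  ring

theorem IsWavelet.exists_peanoKernel_comp_mul_sub {M : ℕ} {L : ℝ} {ψ : ℝ → ℝ}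
    (hψ : IsWavelet (Icc (-L) L) M ψ) (hM : 0 < M) (hL : 0 ≤ L) :
    ∃ B > 0, ∀ σ > 0, ∀ θ, ∃ κ : ℝ → ℝ, IsWindowed (window L σ θ) κ ∧
      IsPeanoKernel M (fun x => ψ (σ * x - θ)) κ ∧ ∀ x, |κ x| ≤ B * (σ ^ M)⁻¹ := by
  obtain ⟨κ, hκ, hpeano, B, hB, hbound⟩ := hψ.exists_bounded_peanoKernel (neg_le_self hL) hM
  refine ⟨B, hB, fun σ hσ θ => ⟨fun x => (σ ^ M)⁻¹ * κ (σ * x - θ), ?_,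
    hpeano.comp_mul_sub hσ.ne' θ, fun x => ?_⟩⟩
  · rw [← preimage_mul_sub_Icc_eq_window L θ hσ]
    exact (hκ.comp_mul_sub hσ.ne' θ).const_mul _
  · rw [abs_mul, abs_of_pos (by positivity), mul_comm]
    gcongr
    exact hbound _

/-- The regularity of `f` needed to form `∂^{M+N} f/∂x^M ∂y^N` by differentiating `M` times in `x`
and then `N` times in `y`, with joint continuity of `f`, `∂^M f/∂x^M` and `∂^{M+N} f/∂x^M ∂y^N`. -/
structure HasContinuousMixedPartial (M N : ℕ) (f : ℝ → ℝ → ℝ) : Prop where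
  contDiff_left : ∀ y, ContDiff ℝ M fun x => f x y
  contDiff_right : ∀ x, ContDiff ℝ N fun y => iteratedDeriv M (fun x' => f x' y) x
  continuous : Continuous fun z : ℝ × ℝ => f z.1 z.2
  continuous_left : Continuous fun z : ℝ × ℝ => iteratedDeriv M (fun x => f x z.2) z.1
  continuous_mixed : Continuous fun z : ℝ × ℝ => partialDeriv2 M N f z.1 z.2

theorem HasContinuousMixedPartial.integral_mul_mul_eq {M N : ℕ} {f : ℝ → ℝ → ℝ}
    (hf : HasContinuousMixedPartial M N f) {s t : Set ℝ} (hs : IsCompact s) (ht : IsCompact t)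
    {φ κ χ η : ℝ → ℝ} (hφ : IsWindowed s φ) (hκ : IsWindowed s κ) (hφκ : IsPeanoKernel M φ κ)
    (hχ : IsWindowed t χ) (hη : IsWindowed t η) (hχη : IsPeanoKernel N χ η) :
    ∫ z : ℝ × ℝ, f z.1 z.2 * φ z.1 * χ z.2 =
      ∫ z : ℝ × ℝ, partialDeriv2 M N f z.1 z.2 * κ z.1 * η z.2 := by
  have hint := hφ.integrable_mul_mul hχ hs ht hf.continuous.continuousOn
  have hintx := hκ.integrable_mul_mul hχ hs ht hf.continuous_left.continuousOn
  have hintxy := hκ.integrable_mul_mul hη hs ht hf.continuous_mixed.continuousOn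
  rw [Measure.volume_eq_prod] at hint hintx hintxy ⊢
  calc ∫ z : ℝ × ℝ, f z.1 z.2 * φ z.1 * χ z.2 ∂(volume.prod volume)
    _ = ∫ y, ∫ x, f x y * φ x * χ y := integral_prod_symm _ hint
    _ = ∫ y, ∫ x, iteratedDeriv M (fun x' => f x' y) x * κ x * χ y := by
      simp only [integral_mul_const, hφκ _ (hf.contDiff_left _)]
    _ = ∫ x, ∫ y, iteratedDeriv M (fun x' => f x' y) x * κ x * χ y :=
      (integral_prod_symm _ hintx).symm.trans (integral_prod _ hintx)
    _ = ∫ x, ∫ y, partialDeriv2 M N f x y * κ x * η y := by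
      simp only [mul_right_comm _ (κ _), integral_mul_const, hχη _ (hf.contDiff_right _),
        partialDeriv2]
    _ = ∫ z : ℝ × ℝ, partialDeriv2 M N f z.1 z.2 * κ z.1 * η z.2 ∂(volume.prod volume) :=
      (integral_prod _ hintxy).symm

theorem integral_norm_le_measureReal_rpow_mul {α E : Type*} [MeasurableSpace α]
    [NormedAddCommGroup E] {μ : Measure α} [IsFiniteMeasure μ] {p : ℝ} (hp : 1 ≤ p) {F : α → E}
    (hF : MemLp F (ENNReal.ofReal p) μ) :
    ∫ z, ‖F z‖ ∂μ ≤ μ.real univ ^ (1 - 1 / p) * (∫ z, ‖F z‖ ^ p ∂μ) ^ (1 / p) := by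
  rcases hp.eq_or_lt with rfl | hp
  · simp
  have hpq : p.HolderConjugate p.conjExponent := .conjExponent hp
  have hq : 1 / p.conjExponent = 1 - 1 / p := by
    simpa only [one_div] using eq_sub_of_add_eq' hpq.inv_add_inv_eq_one
  have hholder := integral_mul_norm_le_Lp_mul_Lq hpq hF.norm
    (memLp_const (1 : ℝ) : MemLp (fun _ => (1 : ℝ)) (ENNReal.ofReal p.conjExponent) μ)
  simpa [hq, mul_comm] using hholder

theorem setIntegral_abs_le_measureReal_rpow_mul {X : Type*} [TopologicalSpace X] [T2Space X]
    [MeasurableSpace X] [OpensMeasurableSpace X] {μ : Measure X} [IsFiniteMeasureOnCompacts μ]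
    {s : Set X} (hs : IsCompact s) {F : X → ℝ} (hF : ContinuousOn F s) {p : ℝ} (hp : 1 ≤ p) :
    ∫ z in s, |F z| ∂μ ≤ μ.real s ^ (1 - 1 / p) * (∫ z in s, |F z| ^ p ∂μ) ^ (1 / p) := by
  have : IsFiniteMeasure (μ.restrict s) := ⟨by simpa using hs.measure_lt_top⟩
  obtain ⟨B, hB⟩ := hs.exists_bound_of_continuousOn hF
  have hLp : MemLp F (ENNReal.ofReal p) (μ.restrict s) :=
    .of_bound (hF.aestronglyMeasurable_of_isCompact hs hs.measurableSet) B
      (ae_restrict_of_forall_mem hs.measurableSet hB)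
  simpa using integral_norm_le_measureReal_rpow_mul hp hLp

theorem HasContinuousMixedPartial.abs_integral_mul_mul_le {M N : ℕ} {f : ℝ → ℝ → ℝ}
    (hf : HasContinuousMixedPartial M N f) {s t : Set ℝ} (hs : IsCompact s) (ht : IsCompact t)
    {φ κ χ η : ℝ → ℝ} (hφ : IsWindowed s φ) (hκ : IsWindowed s κ) (hφκ : IsPeanoKernel M φ κ)
    (hχ : IsWindowed t χ) (hη : IsWindowed t η) (hχη : IsPeanoKernel N χ η) {A B : ℝ}
    (hA : ∀ x, |κ x| ≤ A) (hB : ∀ y, |η y| ≤ B) {p : ℝ} (hp : 1 ≤ p) :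
    |∫ z : ℝ × ℝ, f z.1 z.2 * φ z.1 * χ z.2| ≤
      A * B * (volume.real s * volume.real t) ^ (1 - 1 / p) *
        (∫ z in s ×ˢ t, |partialDeriv2 M N f z.1 z.2| ^ p) ^ (1 / p) := by
  have hA0 : 0 ≤ A := (abs_nonneg _).trans (hA 0)
  have hB0 : 0 ≤ B := (abs_nonneg _).trans (hB 0)
  have hst : IsCompact (s ×ˢ t) := hs.prod ht
  set D := fun z : ℝ × ℝ => partialDeriv2 M N f z.1 z.2
  have hD : ContinuousOn D (s ×ˢ t) := hf.continuous_mixed.continuousOn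
  calc |∫ z : ℝ × ℝ, f z.1 z.2 * φ z.1 * χ z.2|
    _ = |∫ z : ℝ × ℝ, D z * κ z.1 * η z.2| := by
      rw [hf.integral_mul_mul_eq hs ht hφ hκ hφκ hχ hη hχη]
    _ ≤ A * B * ∫ z in s ×ˢ t, |D z| :=
      hκ.abs_integral_mul_mul_le hη hA hB (hD.integrableOn_compact hst)
    _ ≤ A * B * (volume.real (s ×ˢ t) ^ (1 - 1 / p) * (∫ z in s ×ˢ t, |D z| ^ p) ^ (1 / p)) := by
      gcongr
      exact setIntegral_abs_le_measureReal_rpow_mul hst hD hp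
    _ = A * B * (volume.real s * volume.real t) ^ (1 - 1 / p) *
        (∫ z in s ×ˢ t, |D z| ^ p) ^ (1 / p) := by
      rw [Measure.volume_eq_prod, measureReal_prod_prod]
      ring

theorem inv_pow_mul_div_rpow {c σ : ℝ} (hc : 0 ≤ c) (hσ : 0 < σ) (n : ℕ) (r : ℝ) :
    (σ ^ n)⁻¹ * (c / σ) ^ r = c ^ r * σ ^ (-(n + r)) := by
  rw [Real.div_rpow hc hσ.le, neg_add, Real.rpow_add hσ, Real.rpow_neg hσ.le, Real.rpow_natCast,
    Real.rpow_neg hσ.le]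
  ring

theorem rect_wavelet_psi_psi_coef_bound_general {M₁ M₂ : ℕ} (hM₁ : 0 < M₁) (hM₂ : 0 < M₂)
    {L₁ L₂ : ℝ} (hL₁ : 0 < L₁) (hL₂ : 0 < L₂) {p : ℝ} (hp : 1 ≤ p) {ψ₁ ψ₂ : ℝ → ℝ}
    (hψ₁ : IsWavelet (Icc (-L₁) L₁) M₁ ψ₁) (hψ₂ : IsWavelet (Icc (-L₂) L₂) M₂ ψ₂) :
    ∃ C : ℝ, 0 < C ∧ ∀ f : ℝ → ℝ → ℝ, HasContinuousMixedPartial M₁ M₂ f →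
      ∀ σ₁ σ₂ : ℝ, 0 < σ₁ → 0 < σ₂ → ∀ θ₁ θ₂ : ℝ,
        |∫ z : ℝ × ℝ, f z.1 z.2 * ψ₁ (σ₁ * z.1 - θ₁) * ψ₂ (σ₂ * z.2 - θ₂)| ≤
          C * (σ₁ ^ (-((M₁ : ℝ) + 1 - 1 / p)) * σ₂ ^ (-((M₂ : ℝ) + 1 - 1 / p))) *
            (∫ z in window L₁ σ₁ θ₁ ×ˢ window L₂ σ₂ θ₂,
              |partialDeriv2 M₁ M₂ f z.1 z.2| ^ p) ^ (1 / p) := by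
  obtain ⟨B₁, hB₁, hkernel₁⟩ := hψ₁.exists_peanoKernel_comp_mul_sub hM₁ hL₁.le
  obtain ⟨B₂, hB₂, hkernel₂⟩ := hψ₂.exists_peanoKernel_comp_mul_sub hM₂ hL₂.le
  refine ⟨B₁ * B₂ * ((2 * L₁) ^ (1 - 1 / p) * (2 * L₂) ^ (1 - 1 / p)), by positivity,
    fun f hf σ₁ σ₂ hσ₁ hσ₂ θ₁ θ₂ => ?_⟩
  obtain ⟨κ₁, hκ₁, hpeano₁, hbound₁⟩ := hkernel₁ σ₁ hσ₁ θ₁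
  obtain ⟨κ₂, hκ₂, hpeano₂, hbound₂⟩ := hkernel₂ σ₂ hσ₂ θ₂
  have hφ₁ := preimage_mul_sub_Icc_eq_window L₁ θ₁ hσ₁ ▸ hψ₁.comp_mul_sub hσ₁.ne' θ₁
  have hφ₂ := preimage_mul_sub_Icc_eq_window L₂ θ₂ hσ₂ ▸ hψ₂.comp_mul_sub hσ₂.ne' θ₂
  refine (hf.abs_integral_mul_mul_le (isCompact_window L₁ σ₁ θ₁) (isCompact_window L₂ σ₂ θ₂)
    hφ₁ hκ₁ hpeano₁ hφ₂ hκ₂ hpeano₂ hbound₁ hbound₂ hp).trans_eq ?_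
  congr 1
  calc B₁ * (σ₁ ^ M₁)⁻¹ * (B₂ * (σ₂ ^ M₂)⁻¹) *
        (volume.real (window L₁ σ₁ θ₁) * volume.real (window L₂ σ₂ θ₂)) ^ (1 - 1 / p)
    _ = B₁ * B₂ * (((σ₁ ^ M₁)⁻¹ * (2 * L₁ / σ₁) ^ (1 - 1 / p)) *
        ((σ₂ ^ M₂)⁻¹ * (2 * L₂ / σ₂) ^ (1 - 1 / p))) := by
      rw [volume_real_window hL₁.le hσ₁, volume_real_window hL₂.le hσ₂,
        Real.mul_rpow (by positivity) (by positivity)]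
      ring
    _ = _ := by
      rw [inv_pow_mul_div_rpow (by positivity) hσ₁, inv_pow_mul_div_rpow (by positivity) hσ₂,
        ← add_sub_assoc, ← add_sub_assoc]
      ring

theorem isWavelet_of_abs_le {M : ℕ} {L B : ℝ} {ψ : ℝ → ℝ} (hmeas : Measurable ψ)
    (hB : ∀ x, |ψ x| ≤ B) (hsupp : ∀ x, L < |x| → ψ x = 0)
    (hmom : ∀ k < M, ∫ x, x ^ k * ψ x = 0) : IsWavelet (Icc (-L) L) M ψ := by
  have hwindow : support ψ ⊆ Icc (-L) L := fun x hx =>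
    abs_le.1 (not_lt.1 fun hxL => hx (hsupp x hxL))
  have hint : IntegrableOn ψ (Icc (-L) L) :=
    .of_bound measure_Icc_lt_top hmeas.aestronglyMeasurable B (.of_forall hB)
  exact ⟨⟨(integrableOn_iff_integrable_of_support_subset hwindow).1 hint, hwindow⟩, hmom⟩

/-- For a wavelet `ψ̃` with `M` dual vanishing moments and `p ≥ 1` there is a constant
`C > 0` such that for every `f : ℝ² → ℝ` with all mixed partials
`∂^{a+b} f/∂x^a∂y^b`, `0 ≤ a, b ≤ M`, existing and continuous, all `σ₁, σ₂ > 0` and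
`θ₁, θ₂ ∈ ℝ`,
`|∬ f(x,y) ψ̃(σ₁x−θ₁) ψ̃(σ₂y−θ₂) dx dy| ≤
  C (σ₁σ₂)^{−(M+1−1/p)} (∬_{R(σ₁,θ₁,σ₂,θ₂)} |∂^{2M} f/∂x^M∂y^M|^p)^{1/p}`. -/
theorem rect_wavelet_psi_psi_coef_bound
    (M : ℕ) (hM : 0 < M) (L : ℝ) (hL : 0 < L) (p : ℝ) (hp : 1 ≤ p)
    (ψ : ℝ → ℝ) (hmeas : Measurable ψ) (hbdd : ∃ B : ℝ, ∀ x, |ψ x| ≤ B)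
    (hsupp : ∀ x : ℝ, L < |x| → ψ x = 0)
    (hmom : ∀ k : ℕ, k < M → ∫ x : ℝ, x ^ k * ψ x = 0) :
    ∃ C : ℝ, 0 < C ∧
      ∀ f : ℝ → ℝ → ℝ,
        (∀ y : ℝ, ContDiff ℝ M fun x => f x y) →
        (∀ a : ℕ, a ≤ M → ∀ x : ℝ,
          ContDiff ℝ M fun y => iteratedDeriv a (fun x' => f x' y) x) →
        (∀ a b : ℕ, a ≤ M → b ≤ M →
          Continuous fun z : ℝ × ℝ => partialDeriv2 a b f z.1 z.2) →
        ∀ σ₁ σ₂ : ℝ, 0 < σ₁ → 0 < σ₂ → ∀ θ₁ θ₂ : ℝ,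
          |∫ z : ℝ × ℝ, f z.1 z.2 * ψ (σ₁ * z.1 - θ₁) * ψ (σ₂ * z.2 - θ₂)| ≤
            C * (σ₁ * σ₂) ^ (-((M : ℝ) + 1 - 1 / p)) *
              (∫ z in Set.Icc ((θ₁ - L) / σ₁) ((θ₁ + L) / σ₁) ×ˢ
                  Set.Icc ((θ₂ - L) / σ₂) ((θ₂ + L) / σ₂),
                |partialDeriv2 M M f z.1 z.2| ^ p) ^ (1 / p) := by
  obtain ⟨B, hB⟩ := hbdd
  have hψ : IsWavelet (Icc (-L) L) M ψ := isWavelet_of_abs_le hmeas hB hsupp hmom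
  obtain ⟨C, hC, hcoef⟩ := rect_wavelet_psi_psi_coef_bound_general hM hM hL hL hp hψ hψ
  refine ⟨C, hC, fun f hx hy hcont σ₁ σ₂ hσ₁ hσ₂ θ₁ θ₂ => ?_⟩
  have hf : HasContinuousMixedPartial M M f := ⟨hx, hy M le_rfl,
    by simpa [partialDeriv2] using hcont 0 0 M.zero_le M.zero_le,
    by simpa [partialDeriv2] using hcont M 0 le_rfl M.zero_le, hcont M M le_rfl le_rfl⟩
  rw [Real.mul_rpow hσ₁.le hσ₂.le]
  exact hcoef f hf σ₁ σ₂ hσ₁ hσ₂ θ₁ θ₂
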